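/- Let G = ⟨a⟩ × ⟨b⟩ be free abelian of rank two and A a Schur ring over G such that ⟨a⟩ is an A-subgroup and the basic set containing b is contained in b⟨a⟩. Then the basic set D containing b satisfies either D = {b} or D = {a^{i_0} b, b} for some nonzero integer i_0. -/

import Mathlib

noncomputable def simpleQuantity (F : Type*) [Field F] {G : Type*} [Group G]
    (D : Finset G) : MonoidAlgebra F G :=
  ∑ g ∈ D, MonoidAlgebra.single g 1

structure SchurRing (F G : Type*) [Field F] [Group G] where
  parts : Set (Finset G)
  parts_nonempty : ∀ D ∈ parts, D.Nonempty
  cover : ∀ g : G, ∃ D ∈ parts, g ∈ D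
  eq_of_mem : ∀ D₁ ∈ parts, ∀ D₂ ∈ parts, ∀ g : G, g ∈ D₁ → g ∈ D₂ → D₁ = D₂
  one_mem : ({1} : Finset G) ∈ parts
  inv_mem : ∀ D ∈ parts, ∃ D' ∈ parts, ∀ g : G, g ∈ D' ↔ g⁻¹ ∈ D
  mul_mem : ∀ x ∈ Submodule.span F (simpleQuantity F '' parts),
    ∀ y ∈ Submodule.span F (simpleQuantity F '' parts),
    x * y ∈ Submodule.span F (simpleQuantity F '' parts)

noncomputable def SchurRing.span {F G : Type*} [Field F] [Group G] (A : SchurRing F G) :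
    Submodule F (MonoidAlgebra F G) :=
  Submodule.span F (simpleQuantity F '' A.parts)

def SchurRing.IsASet {F G : Type*} [Field F] [Group G] (A : SchurRing F G)
    (S : Set G) : Prop :=
  ∀ D ∈ A.parts, (∃ g ∈ D, g ∈ S) → ↑D ⊆ S

/-- The free abelian group of rank two, written multiplicatively. -/
abbrev Z2 := Multiplicative (ℤ × ℤ)

/-- The first generator `a` of `Z × Z`. -/
def ga : Z2 := Multiplicative.ofAdd (1, 0)

/-- The second generator `b` of `Z × Z`. -/
def gb : Z2 := Multiplicative.ofAdd (0, 1)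

/-!
Modulo a prime `p`, the `p`-th power of the simple quantity of `X` is the simple quantity of the set
of `p`-th powers of elements of `X`, so in a torsion-free abelian group the `n`-th powers of an
`A`-set form an `A`-set (Schur). Applied to the restriction of `A` to the infinite cyclic group
`⟨a⟩`, this makes any two elements of a basic set in `⟨a⟩` powers of each other, hence equal or
inverse to each other.

Let now `m` and `M` be the least and the greatest exponent of a basic set `D ⊆ b⟨a⟩`, and let `T` be
the basic set of `a ^ (M - m)`, so that `T ⊆ {a ^ (M - m), a ^ (m - M)}`. The product `D * T` is an
`A`-set containing `b * a ^ M ∈ D`, hence it contains `D`. So each exponent of `D` differs by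
`M - m` from some exponent of `D`, which forces it to be `m` or `M`.
-/

theorem eq_min'_or_eq_max'_of_sub_mem_or_add_mem {α : Type*} [AddCommGroup α] [LinearOrder α]
    [IsOrderedAddMonoid α] {S : Finset α} (hS : S.Nonempty) {s : α}
    (h : s - (S.max' hS - S.min' hS) ∈ S ∨ s + (S.max' hS - S.min' hS) ∈ S) (hs : s ∈ S) :
    s = S.min' hS ∨ s = S.max' hS := by
  rcases h with h | h
  · have hle : S.max' hS ≤ s := by
      simpa [le_sub_iff_add_le] using S.min'_le _ h
    exact .inr ((S.le_max' s hs).antisymm hle)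
  · have hle : s ≤ S.min' hS := by
      simpa [← le_sub_iff_add_le] using S.le_max' _ h
    exact .inl (hle.antisymm (S.min'_le s hs))

section SimpleQuantity

open MonoidAlgebra
open scoped Pointwise

variable {F G H : Type*} [Field F] [Group G] [Group H]

theorem coeff_simpleQuantity (X : Finset G) (g : G) [Decidable (g ∈ X)] :
    (simpleQuantity F X).coeff g = if g ∈ X then 1 else 0 := by
  classical
  simp [simpleQuantity, coeff_sum, Finset.sum_apply', Finsupp.single_apply]

theorem mapDomain_simpleQuantity (f : H ↪ G) (X : Finset H) :
    mapDomain f (simpleQuantity F X) = simpleQuantity F (X.map f) :=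
  (map_sum (mapDomainLinearMap F F f) _ X).trans (by simp [simpleQuantity])

theorem coeff_simpleQuantity_mul_ne_zero_iff [CharZero F] {X Y : Finset G} {g : G} :
    (simpleQuantity F X * simpleQuantity F Y).coeff g ≠ 0 ↔ g ∈ (X * Y : Set G) := by
  classical
  have coeff_eq_card : (simpleQuantity F X * simpleQuantity F Y).coeff g =
      (((X ×ˢ Y).filter fun q ↦ q.1 * q.2 = g).card : F) := by
    simp [simpleQuantity, Finset.sum_mul_sum, single_mul_single, ← Finset.sum_product',
      coeff_sum, Finset.sum_apply', Finsupp.single_apply]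
  simp [coeff_eq_card, Finset.filter_eq_empty_iff, Set.mem_mul]

theorem coeff_simpleQuantity_pow (X : Finset G) (n : ℕ) (g : G) :
    (simpleQuantity F X ^ n).coeff g =
      (((∑ x ∈ X, single x 1 : MonoidAlgebra ℕ G) ^ n).coeff g : F) := by
  have map_sum_single : mapRingHom G (Nat.castRingHom F) (∑ x ∈ X, single x 1) =
      simpleQuantity F X := by
    simp [simpleQuantity]
  rw [← map_sum_single, ← map_pow, coeff_mapRingHom, eq_natCast]

theorem simpleQuantity_pow_char {G : Type*} [CommGroup G] (p : ℕ) [Fact p.Prime] [CharP F p]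
    [DecidableEq G] {X : Finset G} (hX : Set.InjOn (· ^ p) (X : Set G)) :
    simpleQuantity F X ^ p = simpleQuantity F (X.image (· ^ p)) := by
  have : CharP (MonoidAlgebra F G) p :=
    charP_of_injective_algebraMap' F p
  simp [simpleQuantity, sum_pow_char, Finset.sum_image hX]

theorem mem_iff_mem_of_eq_of_mem {α : Type*} {P : Set (Finset α)}
    (eq_of_mem : ∀ D₁ ∈ P, ∀ D₂ ∈ P, ∀ a, a ∈ D₁ → a ∈ D₂ → D₁ = D₂) {D E : Finset α}
    (hD : D ∈ P) (hE : E ∈ P) {a b : α} (ha : a ∈ E) (hb : b ∈ E) : a ∈ D ↔ b ∈ D :=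
  ⟨fun haD ↦ eq_of_mem D hD E hE a haD ha ▸ hb, fun hbD ↦ eq_of_mem D hD E hE b hbD hb ▸ ha⟩

theorem coeff_eq_of_mem_span_simpleQuantity {P : Set (Finset G)}
    (eq_of_mem : ∀ D₁ ∈ P, ∀ D₂ ∈ P, ∀ g, g ∈ D₁ → g ∈ D₂ → D₁ = D₂) {x : MonoidAlgebra F G}
    (hx : x ∈ Submodule.span F (simpleQuantity F '' P)) {D : Finset G} (hD : D ∈ P) {g h : G}
    (hg : g ∈ D) (hh : h ∈ D) : x.coeff g = x.coeff h := by
  classical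
  induction hx using Submodule.span_induction with
  | mem x hx =>
    obtain ⟨E, hE, rfl⟩ := hx
    simp [coeff_simpleQuantity, mem_iff_mem_of_eq_of_mem eq_of_mem hE hD hg hh]
  | zero => simp
  | add x y _ _ hx hy => simp [hx, hy]
  | smul c x _ hx => simp [hx]

theorem mem_span_simpleQuantity_of_coeff_eq {P : Set (Finset G)} (cover : ∀ g, ∃ D ∈ P, g ∈ D)
    (eq_of_mem : ∀ D₁ ∈ P, ∀ D₂ ∈ P, ∀ g, g ∈ D₁ → g ∈ D₂ → D₁ = D₂) {x : MonoidAlgebra F G}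
    (hx : ∀ D ∈ P, ∀ g ∈ D, ∀ h ∈ D, x.coeff g = x.coeff h) :
    x ∈ Submodule.span F (simpleQuantity F '' P) := by
  classical
  induction hn : x.coeff.support.card using Nat.strong_induction_on generalizing x with
  | _ n ih =>
    subst hn
    obtain h0 | ⟨g, hg⟩ := x.coeff.support.eq_empty_or_nonempty
    · rw [Finsupp.support_eq_empty, coeff_eq_zero] at h0
      exact h0 ▸ zero_mem _
    obtain ⟨D, hD, hgD⟩ := cover g
    let y := x - x.coeff g • simpleQuantity F D
    have coeff_y (h : G) : y.coeff h = if h ∈ D then 0 else x.coeff h := by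
      split_ifs with hh
      · simp [y, coeff_simpleQuantity, hh, hx D hD h hh g hgD]
      · simp [y, coeff_simpleQuantity, hh]
    have support_y : y.coeff.support ⊂ x.coeff.support := by
      refine (Finset.ssubset_iff_of_subset fun h ↦ ?_).2 ⟨g, hg, ?_⟩
      · simp +contextual [coeff_y]
      · simp [coeff_y, hgD]
    have hy : y ∈ Submodule.span F (simpleQuantity F '' P) := by
      refine ih _ (Finset.card_lt_card support_y) (fun E hE h hh k hk ↦ ?_) rfl
      simp only [coeff_y, hx E hE h hh k hk, mem_iff_mem_of_eq_of_mem eq_of_mem hD hE hh hk]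
    rw [← sub_add_cancel x (x.coeff g • simpleQuantity F D)]
    exact add_mem hy (Submodule.smul_mem _ _ (Submodule.subset_span ⟨D, hD, rfl⟩))

end SimpleQuantity

namespace SchurRing

open MonoidAlgebra
open scoped Pointwise

section Group

variable {F G H : Type*} [Field F] [Group G] [Group H] (A : SchurRing F G)

theorem mem_span_iff {x : MonoidAlgebra F G} :
    x ∈ A.span ↔ ∀ D ∈ A.parts, ∀ g ∈ D, ∀ h ∈ D, x.coeff g = x.coeff h :=
  ⟨fun hx _ hD _ hg _ hh ↦ coeff_eq_of_mem_span_simpleQuantity A.eq_of_mem hx hD hg hh,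
    mem_span_simpleQuantity_of_coeff_eq A.cover A.eq_of_mem⟩

theorem one_mem_span : (1 : MonoidAlgebra F G) ∈ A.span :=
  Submodule.subset_span ⟨{1}, A.one_mem, by simp [simpleQuantity, one_def]⟩

variable {A}

theorem pow_mem_span {x : MonoidAlgebra F G} (hx : x ∈ A.span) (n : ℕ) : x ^ n ∈ A.span :=
  pow_mem (S := A.span.toSubalgebra A.one_mem_span fun x y hx hy ↦ A.mul_mem x hx y hy) hx n

theorem isASet_iff {S : Set G} :
    A.IsASet S ↔ ∀ D ∈ A.parts, ∀ g ∈ D, ∀ h ∈ D, g ∈ S → h ∈ S :=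
  ⟨fun hS D hD g hg _ hh hgS ↦ hS D hD ⟨g, hg, hgS⟩ hh,
    fun hS D hD ⟨g, hg, hgS⟩ h hh ↦ hS D hD g hg h hh hgS⟩

theorem isASet_coe_of_mem_parts {D : Finset G} (hD : D ∈ A.parts) : A.IsASet (D : Set G) := by
  rintro E hE ⟨g, hgE, hgD⟩
  rw [A.eq_of_mem E hE D hD g hgE hgD]

theorem simpleQuantity_mem_span {X : Finset G} (hX : A.IsASet (X : Set G)) :
    simpleQuantity F X ∈ A.span := by
  classical
  refine A.mem_span_iff.2 fun D hD g hg h hh ↦ ?_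
  have mem_iff : g ∈ X ↔ h ∈ X :=
    ⟨isASet_iff.1 hX D hD g hg h hh, isASet_iff.1 hX D hD h hh g hg⟩
  simp [coeff_simpleQuantity, mem_iff]

theorem IsASet.mul [CharZero F] {X Y : Finset G} (hX : A.IsASet (X : Set G))
    (hY : A.IsASet (Y : Set G)) : A.IsASet (X * Y : Set G) := by
  refine isASet_iff.2 fun D hD g hg h hh hgXY ↦ ?_
  have hmem : simpleQuantity F X * simpleQuantity F Y ∈ A.span :=
    A.mul_mem _ (simpleQuantity_mem_span hX) _ (simpleQuantity_mem_span hY)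
  rw [← coeff_simpleQuantity_mul_ne_zero_iff (F := F)] at hgXY ⊢
  rwa [← A.mem_span_iff.1 hmem D hD g hg h hh]

theorem exists_map_eq_of_isASet_range {α : Type*} {f : α ↪ G} (hf : A.IsASet (Set.range f))
    {D : Finset G} (hD : D ∈ A.parts) {x : α} (hx : f x ∈ D) : ∃ E : Finset α, E.map f = D := by
  classical
  have hDf : (D : Set G) ⊆ f '' Set.univ := by
    simpa using hf D hD ⟨f x, hx, x, rfl⟩
  obtain ⟨E, -, hE⟩ := Finset.subset_set_image_iff.1 hDf
  exact ⟨E, by rw [Finset.map_eq_image, hE]⟩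

theorem mapDomain_mem_span {f : H ↪ G} {P : Set (Finset H)} (hP : ∀ E ∈ P, E.map f ∈ A.parts)
    {x : MonoidAlgebra F H} (hx : x ∈ Submodule.span F (simpleQuantity F '' P)) :
    mapDomain f x ∈ A.span := by
  refine Submodule.span_le (p := A.span.comap (mapDomainLinearMap F F f)) |>.2 ?_ hx
  rintro _ ⟨E, hE, rfl⟩
  exact Submodule.subset_span ⟨E.map f, hP E hE, (mapDomain_simpleQuantity f E).symm⟩

variable (A) in
/-- The restriction of a Schur ring to an `A`-subgroup, the subgroup being given as the range of an
injective homomorphism so that the restriction can be formed over any isomorphic group. -/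
def comap (f : H →* G) (hinj : Function.Injective f) (hf : A.IsASet (Set.range f)) :
    SchurRing F H :=
  let e : H ↪ G := ⟨f, hinj⟩
  let P : Set (Finset H) := {E | E.map e ∈ A.parts}
  have exists_map {D : Finset G} (hD : D ∈ A.parts) {h : H} (hh : f h ∈ D) :
      ∃ E : Finset H, E.map e = D := exists_map_eq_of_isASet_range (f := e) hf hD hh
  have mem_map {E : Finset H} {h : H} : f h ∈ E.map e ↔ h ∈ E := Finset.mem_map' e
  have cover (h : H) : ∃ E ∈ P, h ∈ E := by
    obtain ⟨D, hD, hhD⟩ := A.cover (f h)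
    obtain ⟨E, rfl⟩ := exists_map hD hhD
    exact ⟨E, hD, mem_map.1 hhD⟩
  have eq_of_mem (E₁) (h₁ : E₁ ∈ P) (E₂) (h₂ : E₂ ∈ P) (h : H) (hh₁ : h ∈ E₁) (hh₂ : h ∈ E₂) :
      E₁ = E₂ :=
    Finset.map_injective e (A.eq_of_mem _ h₁ _ h₂ (f h) (mem_map.2 hh₁) (mem_map.2 hh₂))
  { parts := P
    parts_nonempty := fun E hE ↦ Finset.map_nonempty.1 (A.parts_nonempty _ hE)
    cover := cover
    eq_of_mem := eq_of_mem
    one_mem := by simpa [P, e] using A.one_mem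
    inv_mem := by
      intro E hE
      obtain ⟨h, hh⟩ := Finset.map_nonempty.1 (A.parts_nonempty _ hE)
      obtain ⟨D, hD, hmem⟩ := A.inv_mem _ hE
      have hhD : f h⁻¹ ∈ D := by
        rw [hmem, ← map_inv, inv_inv, mem_map]
        exact hh
      obtain ⟨E', rfl⟩ := exists_map hD hhD
      exact ⟨E', hD, fun k ↦ by rw [← mem_map, hmem, ← map_inv, mem_map]⟩
    mul_mem := by
      intro x hx y hy
      refine mem_span_simpleQuantity_of_coeff_eq cover eq_of_mem fun E hE g hg h hh ↦ ?_
      have hxy := A.mul_mem _ (mapDomain_mem_span (f := e) (fun _ ↦ id) hx) _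
        (mapDomain_mem_span (f := e) (fun _ ↦ id) hy)
      have coeff_eq := A.mem_span_iff.1 hxy _ hE _ (mem_map.2 hg) _ (mem_map.2 hh)
      change (mapDomain f x * mapDomain f y).coeff (f g) =
        (mapDomain f x * mapDomain f y).coeff (f h) at coeff_eq
      rw [← mapDomain_mul] at coeff_eq
      simpa [Finsupp.mapDomain_apply hinj] using coeff_eq }

theorem mem_parts_comap {f : H →* G} {hinj : Function.Injective f}
    {hf : A.IsASet (Set.range f)} {E : Finset H} :
    E ∈ (A.comap f hinj hf).parts ↔ E.map ⟨f, hinj⟩ ∈ A.parts :=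
  Iff.rfl

end Group

section CommGroup

variable {F G : Type*} [Field F] [CharZero F] [CommGroup G] [IsMulTorsionFree G]
  {A : SchurRing F G} {X : Finset G}

theorem IsASet.image_pow_prime {p : ℕ} (hp : p.Prime) (hX : A.IsASet (X : Set G)) :
    A.IsASet ((· ^ p) '' (X : Set G)) := by
  classical
  have : Fact p.Prime := ⟨hp⟩
  refine isASet_iff.2 fun D hD g hg h hh hgX ↦ ?_
  have pow_mem := pow_mem_span (simpleQuantity_mem_span hX) p
  have coeff_eq := A.mem_span_iff.1 pow_mem D hD g hg h hh
  -- These coefficients are natural numbers, so their equality passes from `F` to `ZMod p`.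
  rw [coeff_simpleQuantity_pow, coeff_simpleQuantity_pow, Nat.cast_inj] at coeff_eq
  replace coeff_eq := congrArg (Nat.cast (R := ZMod p)) coeff_eq
  rw [← coeff_simpleQuantity_pow, ← coeff_simpleQuantity_pow,
    simpleQuantity_pow_char p (pow_left_injective hp.ne_zero).injOn] at coeff_eq
  rw [← Finset.coe_image, Finset.mem_coe] at hgX ⊢
  by_contra hhX
  simp [coeff_simpleQuantity, hgX, hhX, -Finset.mem_image] at coeff_eq

theorem IsASet.image_pow (hX : A.IsASet (X : Set G)) (n : ℕ) :
    A.IsASet ((· ^ n) '' (X : Set G)) := by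
  classical
  induction n using induction_on_primes generalizing X with
  | zero =>
    obtain rfl | hne := X.eq_empty_or_nonempty
    · simp [IsASet]
    · simpa [(Finset.coe_nonempty.2 hne).image_const] using isASet_coe_of_mem_parts A.one_mem
  | one => simpa using hX
  | prime_mul p n hp ih =>
    have hXp : A.IsASet ((X.image (· ^ p) : Finset G) : Set G) := by
      simpa using hX.image_pow_prime hp
    simpa [Set.image_image, pow_mul] using ih hXp

theorem exists_pow_eq_of_mem_parts {D : Finset G} (hD : D ∈ A.parts) {n : ℕ} {x y : G}
    (hx : x ^ n ∈ D) (hy : y ∈ D) : ∃ z, z ^ n = y := by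
  obtain ⟨E, hE, hxE⟩ := A.cover x
  obtain ⟨z, -, hz⟩ :=
    isASet_iff.1 ((isASet_coe_of_mem_parts hE).image_pow n) D hD _ hx y hy ⟨x, hxE, rfl⟩
  exact ⟨z, hz⟩

end CommGroup

section InfiniteCyclic

open Multiplicative

variable {F : Type*} [Field F] [CharZero F]

theorem toAdd_dvd_toAdd_of_mem_parts {A : SchurRing F (Multiplicative ℤ)}
    {D : Finset (Multiplicative ℤ)} (hD : D ∈ A.parts) {x y : Multiplicative ℤ} (hx : x ∈ D)
    (hy : y ∈ D) : toAdd x ∣ toAdd y := by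
  have sign_pow : ofAdd (toAdd x).sign ^ (toAdd x).natAbs = x := by
    rw [← ofAdd_nsmul, nsmul_eq_mul, mul_comm, Int.sign_mul_natAbs, ofAdd_toAdd]
  obtain ⟨z, rfl⟩ := exists_pow_eq_of_mem_parts hD (sign_pow ▸ hx) hy
  rw [toAdd_pow, nsmul_eq_mul]
  exact Int.dvd_natAbs_self.mul_right _

theorem eq_or_eq_inv_of_mem_parts {A : SchurRing F (Multiplicative ℤ)}
    {D : Finset (Multiplicative ℤ)} (hD : D ∈ A.parts) {x y : Multiplicative ℤ} (hx : x ∈ D)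
    (hy : y ∈ D) : y = x ∨ y = x⁻¹ :=
  Int.natAbs_eq_natAbs_iff.1 <| Nat.dvd_antisymm
    (Int.natAbs_dvd_natAbs.2 (toAdd_dvd_toAdd_of_mem_parts hD hy hx))
    (Int.natAbs_dvd_natAbs.2 (toAdd_dvd_toAdd_of_mem_parts hD hx hy))

theorem eq_or_eq_inv_of_zpow_mem_parts {G : Type*} [Group G] {A : SchurRing F G} {a : G}
    (ha : ¬IsOfFinOrder a) (haA : A.IsASet ↑(Subgroup.zpowers a)) {T : Finset G}
    (hT : T ∈ A.parts) {k : ℤ} (hk : a ^ k ∈ T) {t : G} (ht : t ∈ T) :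
    t = a ^ k ∨ t = (a ^ k)⁻¹ := by
  have hinj : Function.Injective (zpowersHom G a) := injective_zpow_iff_not_isOfFinOrder.2 ha
  have hrange : A.IsASet (Set.range (zpowersHom G a)) := haA
  obtain ⟨E, rfl⟩ := exists_map_eq_of_isASet_range (f := ⟨_, hinj⟩) hrange hT (x := ofAdd k) hk
  obtain ⟨y, hy, rfl⟩ := Finset.mem_map.1 ht
  have hE : E ∈ (A.comap _ hinj hrange).parts := mem_parts_comap.2 hT
  refine (eq_or_eq_inv_of_mem_parts hE ((Finset.mem_map' _).1 hk) hy).imp ?_ ?_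
  · rintro rfl
    rfl
  · rintro rfl
    exact map_inv (zpowersHom G a) (ofAdd k)

end InfiniteCyclic

section Coset

variable {F G : Type*} [Field F] [CharZero F] [Group G] {A : SchurRing F G} {a b : G}
  {D : Finset G}

theorem mul_inv_zpow_mem_or_mul_zpow_mem (ha : ¬IsOfFinOrder a)
    (haA : A.IsASet ↑(Subgroup.zpowers a)) (hD : D ∈ A.parts) {g h : G} {k : ℤ} (hg : g ∈ D)
    (hgk : g * a ^ k ∈ D) (hh : h ∈ D) : h * (a ^ k)⁻¹ ∈ D ∨ h * a ^ k ∈ D := by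
  obtain ⟨T, hT, hkT⟩ := A.cover (a ^ k)
  have isASet_mul := (isASet_coe_of_mem_parts hD).mul (isASet_coe_of_mem_parts hT)
  obtain ⟨d, hd, t, ht, rfl⟩ := Set.mem_mul.1 <|
    isASet_iff.1 isASet_mul D hD _ hgk h hh (Set.mul_mem_mul hg hkT)
  refine (eq_or_eq_inv_of_zpow_mem_parts ha haA hT hkT ht).imp ?_ ?_ <;>
  · rintro rfl
    simpa using hd

theorem card_le_two_of_subset_coset (ha : ¬IsOfFinOrder a)
    (haA : A.IsASet ↑(Subgroup.zpowers a)) (hD : D ∈ A.parts)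
    (hsub : ∀ g ∈ D, ∃ i : ℤ, g = b * a ^ i) : D.card ≤ 2 := by
  classical
  have hinj : Function.Injective fun i : ℤ ↦ b * a ^ i :=
    (mul_right_injective b).comp (injective_zpow_iff_not_isOfFinOrder.2 ha)
  have hrange : (D : Set G) ⊆ (fun i : ℤ ↦ b * a ^ i) '' Set.univ := fun g hg ↦
    let ⟨i, hi⟩ := hsub g hg
    ⟨i, trivial, hi.symm⟩
  obtain ⟨S, -, rfl⟩ := Finset.subset_set_image_iff.1 hrange
  have mem_image {i : ℤ} : b * a ^ i ∈ S.image (fun i ↦ b * a ^ i) ↔ i ∈ S :=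
    hinj.mem_finset_image
  have hS : S.Nonempty := Finset.image_nonempty.1 (A.parts_nonempty _ hD)
  have subset_pair : S ⊆ {S.min' hS, S.max' hS} := fun s hs ↦ by
    have max_mem : b * a ^ S.min' hS * a ^ (S.max' hS - S.min' hS) ∈
        S.image (fun i ↦ b * a ^ i) := by
      rw [mul_assoc, ← zpow_add, add_sub_cancel, mem_image]
      exact S.max'_mem hS
    have shift := mul_inv_zpow_mem_or_mul_zpow_mem ha haA hD (mem_image.2 (S.min'_mem hS)) max_mem
      (mem_image.2 hs)
    rw [mul_assoc, mul_assoc, ← zpow_sub, ← zpow_add, mem_image, mem_image] at shift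
    simpa using eq_min'_or_eq_max'_of_sub_mem_or_add_mem hS shift hs
  exact Finset.card_image_le.trans <| (Finset.card_le_card subset_pair).trans Finset.card_le_two

end Coset

end SchurRing

theorem basic_set_in_coset_general {F G : Type*} [Field F] [CharZero F] [Group G] [DecidableEq G]
    (A : SchurRing F G) {a b : G} (ha : ¬IsOfFinOrder a) (haA : A.IsASet ↑(Subgroup.zpowers a))
    (D : Finset G) (hD : D ∈ A.parts) (hbD : b ∈ D) (hsub : ∀ g ∈ D, ∃ i : ℤ, g = b * a ^ i) :
    D = {b} ∨ ∃ i₀ : ℤ, i₀ ≠ 0 ∧ D = {b * a ^ i₀, b} := by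
  refine (D.eq_singleton_or_nontrivial hbD).imp_right fun hD2 ↦ ?_
  obtain ⟨g, hg, hgb⟩ := hD2.exists_ne b
  obtain ⟨i, rfl⟩ := hsub g hg
  refine ⟨i, by rintro rfl; simp at hgb, (Finset.eq_of_subset_of_card_le ?_ ?_).symm⟩
  · simp [Finset.insert_subset_iff, hg, hbD]
  · rw [Finset.card_pair hgb]
    exact SchurRing.card_le_two_of_subset_coset ha haA hD hsub

/-- If `⟨a⟩` is an `A`-subgroup and the basic set `D` containing `b` lies in the
coset `b⟨a⟩`, then `D = {b}` or `D = {a^{i₀} b, b}` for some nonzero `i₀`. -/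
theorem basic_set_in_coset {F : Type*} [Field F] [CharZero F]
    (A : SchurRing F Z2) (ha : A.IsASet ↑(Subgroup.zpowers ga))
    (D : Finset Z2) (hD : D ∈ A.parts) (hbD : gb ∈ D)
    (hsub : ∀ g ∈ D, ∃ i : ℤ, g = gb * ga ^ i) :
    D = {gb} ∨ ∃ i₀ : ℤ, i₀ ≠ 0 ∧ D = {ga ^ i₀ * gb, gb} := by
  have ha_inf : ¬IsOfFinOrder ga := not_isOfFinOrder_of_isMulTorsionFree (by decide)
  simpa only [mul_comm _ gb] using basic_set_in_coset_general A ha_inf ha D hD hbD hsub
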